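/- arXiv:1509.08526 — 4 statements merged into one kernel-verified Lean document; each statement's English description precedes it below -/
import Mathlib

section
/- Let g > 0, let ζ: ℝ² × ℝ → ℝ be C², and let (x(t), y(t)) be a C² curve. Define λ(t) = (ζ_xt ẋ + ζ_yt ẏ + ζ_xx ẋ² + 2ζ_xy ẋẏ + ζ_yy ẏ² + ζ_tt + g)/(1 + ζ_x² + ζ_y²), with all partial derivatives of ζ evaluated at (x(t), y(t), t). Then (x(t), y(t)) satisfies the constrained Euler–Lagrange equations ẍ + λ ζ_x = 0 and ÿ + λ ζ_y = 0 if and only if it satisfies the John–Sclavounos equations. -/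
noncomputable section

/-- Partial derivative of `ζ(x,y,t)` with respect to `x`. -/
def dX (ζ : ℝ × ℝ × ℝ → ℝ) (p : ℝ × ℝ × ℝ) : ℝ := fderiv ℝ ζ p (1, 0, 0)

/-- Partial derivative of `ζ(x,y,t)` with respect to `y`. -/
def dY (ζ : ℝ × ℝ × ℝ → ℝ) (p : ℝ × ℝ × ℝ) : ℝ := fderiv ℝ ζ p (0, 1, 0)

/-- Partial derivative of `ζ(x,y,t)` with respect to `t`. -/
def dT (ζ : ℝ × ℝ × ℝ → ℝ) (p : ℝ × ℝ × ℝ) : ℝ := fderiv ℝ ζ p (0, 0, 1)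

def dXX (ζ : ℝ × ℝ × ℝ → ℝ) (p : ℝ × ℝ × ℝ) : ℝ := fderiv ℝ (dX ζ) p (1, 0, 0)
def dXY (ζ : ℝ × ℝ × ℝ → ℝ) (p : ℝ × ℝ × ℝ) : ℝ := fderiv ℝ (dX ζ) p (0, 1, 0)
def dXT (ζ : ℝ × ℝ × ℝ → ℝ) (p : ℝ × ℝ × ℝ) : ℝ := fderiv ℝ (dX ζ) p (0, 0, 1)
def dYY (ζ : ℝ × ℝ × ℝ → ℝ) (p : ℝ × ℝ × ℝ) : ℝ := fderiv ℝ (dY ζ) p (0, 1, 0)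
def dYT (ζ : ℝ × ℝ × ℝ → ℝ) (p : ℝ × ℝ × ℝ) : ℝ := fderiv ℝ (dY ζ) p (0, 0, 1)
def dTT (ζ : ℝ × ℝ × ℝ → ℝ) (p : ℝ × ℝ × ℝ) : ℝ := fderiv ℝ (dT ζ) p (0, 0, 1)

/-- The John–Sclavounos equations for a horizontal trajectory `(x(t), y(t))` on the
unsteady surface `z = ζ(x,y,t)`, at time `t`, with gravitational acceleration `g`. -/
def JSEq (g : ℝ) (ζ : ℝ × ℝ × ℝ → ℝ) (x y : ℝ → ℝ) (t : ℝ) : Prop :=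
  (1 + dX ζ (x t, y t, t) ^ 2) * deriv (deriv x) t
      + dX ζ (x t, y t, t) * dY ζ (x t, y t, t) * deriv (deriv y) t
      + (dTT ζ (x t, y t, t) + dXT ζ (x t, y t, t) * deriv x t
          + dYT ζ (x t, y t, t) * deriv y t + dXX ζ (x t, y t, t) * (deriv x t) ^ 2
          + 2 * dXY ζ (x t, y t, t) * deriv x t * deriv y t
          + dYY ζ (x t, y t, t) * (deriv y t) ^ 2 + g) * dX ζ (x t, y t, t) = 0
  ∧ (1 + dY ζ (x t, y t, t) ^ 2) * deriv (deriv y) t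
      + dX ζ (x t, y t, t) * dY ζ (x t, y t, t) * deriv (deriv x) t
      + (dTT ζ (x t, y t, t) + dXT ζ (x t, y t, t) * deriv x t
          + dYT ζ (x t, y t, t) * deriv y t + dXX ζ (x t, y t, t) * (deriv x t) ^ 2
          + 2 * dXY ζ (x t, y t, t) * deriv x t * deriv y t
          + dYY ζ (x t, y t, t) * (deriv y t) ^ 2 + g) * dY ζ (x t, y t, t) = 0

/-- The matrix `1 + n nᵀ` with `n = (a, b)` has trivial kernel. -/
theorem eq_zero_and_eq_zero_iff_one_add_outer (a b u v : ℝ) :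
    (u = 0 ∧ v = 0) ↔
      (1 + a ^ 2) * u + a * b * v = 0 ∧ (1 + b ^ 2) * v + a * b * u = 0 := by
  constructor
  · rintro ⟨rfl, rfl⟩
    simp
  · rintro ⟨h₁, h₂⟩
    have hD : 1 + a ^ 2 + b ^ 2 ≠ 0 := by positivity
    constructor
    · apply (mul_eq_zero_iff_left hD).mp
      linear_combination (1 + b ^ 2) * h₁ - a * b * h₂
    · apply (mul_eq_zero_iff_left hD).mp
      linear_combination (1 + a ^ 2) * h₂ - a * b * h₁

/-- With the Lagrange multiplier
`λ = (ζ_xt ẋ + ζ_yt ẏ + ζ_xx ẋ² + 2ζ_xy ẋẏ + ζ_yy ẏ² + ζ_tt + g)/(1 + ζ_x² + ζ_y²)`,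
the trajectory satisfies the constrained Euler–Lagrange equations
`ẍ + λ ζ_x = 0`, `ÿ + λ ζ_y = 0` if and only if it satisfies the John–Sclavounos
equations. -/
theorem eulerLagrange_iff_JS
    (g : ℝ) (hg : 0 < g) (ζ : ℝ × ℝ × ℝ → ℝ) (hζ : ContDiff ℝ 2 ζ)
    (x y : ℝ → ℝ) (hx : ContDiff ℝ 2 x) (hy : ContDiff ℝ 2 y)
    (lam : ℝ → ℝ)
    (hlam : ∀ t, lam t =
      (dXT ζ (x t, y t, t) * deriv x t + dYT ζ (x t, y t, t) * deriv y t
        + dXX ζ (x t, y t, t) * (deriv x t) ^ 2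
        + 2 * dXY ζ (x t, y t, t) * deriv x t * deriv y t
        + dYY ζ (x t, y t, t) * (deriv y t) ^ 2 + dTT ζ (x t, y t, t) + g)
        / (1 + dX ζ (x t, y t, t) ^ 2 + dY ζ (x t, y t, t) ^ 2)) :
    (∀ t, deriv (deriv x) t + lam t * dX ζ (x t, y t, t) = 0 ∧
          deriv (deriv y) t + lam t * dY ζ (x t, y t, t) = 0)
    ↔ (∀ t, JSEq g ζ x y t) := by
  refine forall_congr' fun t => ?_
  have hD : 1 + dX ζ (x t, y t, t) ^ 2 + dY ζ (x t, y t, t) ^ 2 ≠ 0 := by positivity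
  have hQ := (eq_div_iff hD).mp (hlam t)
  rw [eq_zero_and_eq_zero_iff_one_add_outer (dX ζ (x t, y t, t)) (dY ζ (x t, y t, t)), JSEq]
  refine and_congr ?_ ?_
  · refine Eq.congr ?_ rfl
    linear_combination dX ζ (x t, y t, t) * hQ
  · refine Eq.congr ?_ rfl
    linear_combination dY ζ (x t, y t, t) * hQ

end
end

section
/- Let g > 0 and let ζ: ℝ² → ℝ be a C² time-independent surface elevation. If (x(t), y(t)) is a C² solution of the steady John–Sclavounos equations on an interval J, then the Hamiltonian H(t) = g ζ(x(t),y(t)) + ½(ẋ(t)² + ẏ(t)²) + ½(ẋ(t) ζ_x(x(t),y(t)) + ẏ(t) ζ_y(x(t),y(t)))² is constant on J. -/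
noncomputable section

/-- Partial derivative of `ζ(x,y)` with respect to `x`. -/
def dx (ζ : ℝ × ℝ → ℝ) (p : ℝ × ℝ) : ℝ := fderiv ℝ ζ p (1, 0)

/-- Partial derivative of `ζ(x,y)` with respect to `y`. -/
def dy (ζ : ℝ × ℝ → ℝ) (p : ℝ × ℝ) : ℝ := fderiv ℝ ζ p (0, 1)

def dxx (ζ : ℝ × ℝ → ℝ) (p : ℝ × ℝ) : ℝ := fderiv ℝ (dx ζ) p (1, 0)
def dxy (ζ : ℝ × ℝ → ℝ) (p : ℝ × ℝ) : ℝ := fderiv ℝ (dx ζ) p (0, 1)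
def dyy (ζ : ℝ × ℝ → ℝ) (p : ℝ × ℝ) : ℝ := fderiv ℝ (dy ζ) p (0, 1)

/-- The steady John–Sclavounos equations for a horizontal trajectory `(x(t), y(t))` on
the time-independent surface `z = ζ(x,y)`, at time `t`, with gravity `g`:
`(1+ζ_x²)ẍ + ζ_xζ_y ÿ + Q ζ_x = 0` and `(1+ζ_y²)ÿ + ζ_xζ_y ẍ + Q ζ_y = 0`, where
`Q = ζ_xx ẋ² + 2ζ_xy ẋẏ + ζ_yy ẏ² + g`. -/
def SteadyJSEq (g : ℝ) (ζ : ℝ × ℝ → ℝ) (x y : ℝ → ℝ) (t : ℝ) : Prop :=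
  (1 + dx ζ (x t, y t) ^ 2) * deriv (deriv x) t
      + dx ζ (x t, y t) * dy ζ (x t, y t) * deriv (deriv y) t
      + (dxx ζ (x t, y t) * (deriv x t) ^ 2
          + 2 * dxy ζ (x t, y t) * deriv x t * deriv y t
          + dyy ζ (x t, y t) * (deriv y t) ^ 2 + g) * dx ζ (x t, y t) = 0
  ∧ (1 + dy ζ (x t, y t) ^ 2) * deriv (deriv y) t
      + dx ζ (x t, y t) * dy ζ (x t, y t) * deriv (deriv x) t
      + (dxx ζ (x t, y t) * (deriv x t) ^ 2
          + 2 * dxy ζ (x t, y t) * deriv x t * deriv y t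
          + dyy ζ (x t, y t) * (deriv y t) ^ 2 + g) * dy ζ (x t, y t) = 0

theorem hasDerivAt_comp_curve {f : ℝ × ℝ → ℝ} {x y : ℝ → ℝ} {u v t : ℝ}
    (hf : DifferentiableAt ℝ f (x t, y t)) (hx : HasDerivAt x u t) (hy : HasDerivAt y v t) :
    HasDerivAt (fun s => f (x s, y s)) (u * dx f (x t, y t) + v * dy f (x t, y t)) t := by
  have h := hf.hasFDerivAt.comp_hasDerivAt t (hx.prodMk hy)
  have e : ((u, v) : ℝ × ℝ) = u • ((1, 0) : ℝ × ℝ) + v • ((0, 1) : ℝ × ℝ) := by simp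
  rw [e, map_add, map_smul, map_smul] at h
  exact h

theorem fderiv_fderiv_apply {ζ : ℝ × ℝ → ℝ} (hζ : ContDiff ℝ 2 ζ) (p v w : ℝ × ℝ) :
    fderiv ℝ (fun q => fderiv ℝ ζ q v) p w = fderiv ℝ (fderiv ℝ ζ) p w v := by
  have hd : DifferentiableAt ℝ (fderiv ℝ ζ) p :=
    (hζ.fderiv_right (m := 1) (by norm_num)).differentiable (by norm_num) p
  rw [fderiv_clm_apply hd (differentiableAt_const v)]
  simp

/-- The mixed second partial derivatives of a C² function agree. -/
theorem dx_dy_eq_dxy {ζ : ℝ × ℝ → ℝ} (hζ : ContDiff ℝ 2 ζ) (p : ℝ × ℝ) :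
    dx (dy ζ) p = dxy ζ p := by
  have hs : IsSymmSndFDerivAt ℝ ζ p := hζ.contDiffAt.isSymmSndFDerivAt (by simp)
  exact (fderiv_fderiv_apply hζ p (0, 1) (1, 0)).trans
    ((hs.eq _ _).trans (fderiv_fderiv_apply hζ p (1, 0) (0, 1)).symm)

theorem hasDerivAt_deriv_of_contDiff_two {x : ℝ → ℝ} (hx : ContDiff ℝ 2 x) (t : ℝ) :
    HasDerivAt (deriv x) (deriv (deriv x) t) t :=
  ((ContDiff.deriv' (n := 1) (by simpa [one_add_one_eq_two] using hx)).differentiable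
    (by norm_num) t).hasDerivAt

theorem SteadyJSEq.hasDerivAt_hamiltonian {g : ℝ} {ζ : ℝ × ℝ → ℝ} {x y : ℝ → ℝ} {t : ℝ}
    (h : SteadyJSEq g ζ x y t) (hζ : ContDiff ℝ 2 ζ) (hx : ContDiff ℝ 2 x)
    (hy : ContDiff ℝ 2 y) :
    HasDerivAt (fun t => g * ζ (x t, y t) + (1 / 2) * ((deriv x t) ^ 2 + (deriv y t) ^ 2)
      + (1 / 2) * (deriv x t * dx ζ (x t, y t) + deriv y t * dy ζ (x t, y t)) ^ 2) 0 t := by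
  have hx₁ := (hx.differentiable (by norm_num) t).hasDerivAt
  have hy₁ := (hy.differentiable (by norm_num) t).hasDerivAt
  have hx₂ := hasDerivAt_deriv_of_contDiff_two hx t
  have hy₂ := hasDerivAt_deriv_of_contDiff_two hy t
  have hd : Differentiable ℝ (fderiv ℝ ζ) :=
    (hζ.fderiv_right (m := 1) (by norm_num)).differentiable (by norm_num)
  have hζ₀ := hasDerivAt_comp_curve (hζ.differentiable (by norm_num) _) hx₁ hy₁
  have hζx := hasDerivAt_comp_curve (f := dx ζ)
    ((hd _).clm_apply (differentiableAt_const _)) hx₁ hy₁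
  have hζy := hasDerivAt_comp_curve (f := dy ζ)
    ((hd _).clm_apply (differentiableAt_const _)) hx₁ hy₁
  rw [dx_dy_eq_dxy hζ] at hζy
  have hH := ((hζ₀.const_mul g).add (((hx₂.pow 2).add (hy₂.pow 2)).const_mul (1 / 2))).add
    ((((hx₂.mul hζx).add (hy₂.mul hζy)).pow 2).const_mul (1 / 2))
  refine hH.congr_deriv ?_
  obtain ⟨h₁, h₂⟩ := h
  have hxx : dx (dx ζ) (x t, y t) = dxx ζ (x t, y t) := rfl
  have hxy : dy (dx ζ) (x t, y t) = dxy ζ (x t, y t) := rfl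
  have hyy : dy (dy ζ) (x t, y t) = dyy ζ (x t, y t) := rfl
  simp only [hxx, hxy, hyy, Pi.add_apply, Pi.mul_apply, Nat.cast_ofNat]
  linear_combination deriv x t * h₁ + deriv y t * h₂

/-- For a C² solution of the steady John–Sclavounos equations on an
interval `J`, the Hamiltonian
`H(t) = g ζ + ½(ẋ² + ẏ²) + ½(ẋ ζ_x + ẏ ζ_y)²` is constant on `J`. -/
theorem steadyJS_hamiltonian_conserved
    (g : ℝ) (hg : 0 < g) (ζ : ℝ × ℝ → ℝ) (hζ : ContDiff ℝ 2 ζ)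
    (x y : ℝ → ℝ) (hx : ContDiff ℝ 2 x) (hy : ContDiff ℝ 2 y)
    (J : Set ℝ) (hJ : J.OrdConnected)
    (hJS : ∀ t ∈ J, SteadyJSEq g ζ x y t)
    (H : ℝ → ℝ)
    (hH : ∀ t, H t = g * ζ (x t, y t) + (1 / 2) * ((deriv x t) ^ 2 + (deriv y t) ^ 2)
      + (1 / 2) * (deriv x t * dx ζ (x t, y t) + deriv y t * dy ζ (x t, y t)) ^ 2) :
    ∀ s ∈ J, ∀ t ∈ J, H s = H t := by
  intro s hs t ht
  have hd : ∀ r ∈ J, HasDerivWithinAt H 0 J r := fun r hr => by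
    rw [funext hH]
    exact ((hJS r hr).hasDerivAt_hamiltonian hζ hx hy).hasDerivWithinAt
  have h := hJ.convex.norm_image_sub_le_of_norm_hasDerivWithin_le (C := 0) hd (by simp) ht hs
  rw [zero_mul, norm_le_zero_iff, sub_eq_zero] at h
  exact h

end
end

section
/- (Vorticity created on an unsteady free surface.) Let ζ: ℝ² × ℝ → ℝ be C², let (x(t), y(t)) be a C¹ horizontal trajectory with velocity (ẋ, ẏ), define h = 1 + ζ_x² + ζ_y² and the unit outward normal n(t) = (−ζ_x, −ζ_y, 1)/√h, with all partial derivatives of ζ evaluated at (x(t), y(t), t). Then the tangential vorticity vector ω_∥ := 2 n × (dn/dt) equals (2/h)(G_y, −G_x, ζ_x G_y − ζ_y G_x), where G_x = ζ_xt + ẋ ζ_xx + ẏ ζ_xy and G_y = ζ_yt + ẋ ζ_xy + ẏ ζ_yy. -/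
noncomputable section

/-- Mixed second partial derivatives of a C² surface elevation commute. -/
theorem fderiv_dY_apply_eq_dXY {ζ : ℝ × ℝ × ℝ → ℝ} (hζ : ContDiff ℝ 2 ζ) (p : ℝ × ℝ × ℝ) :
    fderiv ℝ (dY ζ) p (1, 0, 0) = dXY ζ p := by
  have hd : DifferentiableAt ℝ (fderiv ℝ ζ) p :=
    ((hζ.fderiv_right (m := 1) (by norm_num)).differentiable (by norm_num)) p
  have hsymm : IsSymmSndFDerivAt ℝ ζ p := hζ.contDiffAt.isSymmSndFDerivAt (by simp)
  have key : ∀ v w : ℝ × ℝ × ℝ,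
      fderiv ℝ (fun q => fderiv ℝ ζ q v) p w = fderiv ℝ (fderiv ℝ ζ) p w v := by
    intro v w
    rw [fderiv_clm_apply hd (differentiableAt_const v)]
    simp
  exact (key _ _).trans ((hsymm _ _).trans (key _ _).symm)

/-- Chain rule along a horizontal trajectory. -/
theorem hasDerivAt_along_trajectory {f : ℝ × ℝ × ℝ → ℝ} {x y : ℝ → ℝ} {t : ℝ}
    (hf : DifferentiableAt ℝ f (x t, y t, t)) (hx : DifferentiableAt ℝ x t)
    (hy : DifferentiableAt ℝ y t) :
    HasDerivAt (fun s => f (x s, y s, s))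
      (fderiv ℝ f (x t, y t, t) (0, 0, 1) + deriv x t * fderiv ℝ f (x t, y t, t) (1, 0, 0)
        + deriv y t * fderiv ℝ f (x t, y t, t) (0, 1, 0)) t := by
  have hpath : HasDerivAt (fun s => (x s, y s, s)) (deriv x t, deriv y t, (1 : ℝ)) t :=
    hx.hasDerivAt.prodMk (hy.hasDerivAt.prodMk (hasDerivAt_id t))
  have hv : (deriv x t, deriv y t, (1 : ℝ)) = ((0, 0, 1) : ℝ × ℝ × ℝ)
      + deriv x t • ((1, 0, 0) : ℝ × ℝ × ℝ) + deriv y t • ((0, 1, 0) : ℝ × ℝ × ℝ) := by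
    simp
  have hcomp := hf.hasFDerivAt.comp_hasDerivAt t hpath
  rw [hv, map_add, map_add, map_smul, map_smul] at hcomp
  exact hcomp

/-- Rescaling a moving vector by a scalar function multiplies its cross product with its derivative
by the square of that function. -/
theorem crossProduct_deriv_smul {c : ℝ → ℝ} {m : ℝ → Fin 3 → ℝ} {m' : Fin 3 → ℝ} {t : ℝ}
    (hc : DifferentiableAt ℝ c t) (hm : HasDerivAt m m' t) :
    crossProduct (c t • m t) (deriv (fun s => c s • m s) t)
      = c t ^ 2 • crossProduct (m t) m' := by
  rw [(hc.hasDerivAt.fun_smul hm).deriv]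
  simp [smul_smul, pow_two]

/-- (Vorticity created on an unsteady free surface.) Along a C¹
horizontal trajectory `(x(t), y(t))` on the C² surface `z = ζ(x,y,t)`, with
`h = 1 + ζ_x² + ζ_y²` and outward unit normal `n = (−ζ_x, −ζ_y, 1)/√h`, the tangential
vorticity `ω_∥ = 2 n × (dn/dt)` equals `(2/h)(G_y, −G_x, ζ_x G_y − ζ_y G_x)`, where
`G_x = ζ_xt + ẋ ζ_xx + ẏ ζ_xy` and `G_y = ζ_yt + ẋ ζ_xy + ẏ ζ_yy`. -/
theorem surface_vorticity_formula
    (ζ : ℝ × ℝ × ℝ → ℝ) (hζ : ContDiff ℝ 2 ζ)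
    (x y : ℝ → ℝ) (hx : ContDiff ℝ 1 x) (hy : ContDiff ℝ 1 y)
    (h : ℝ → ℝ)
    (hh : ∀ t, h t = 1 + dX ζ (x t, y t, t) ^ 2 + dY ζ (x t, y t, t) ^ 2)
    (n : ℝ → Fin 3 → ℝ)
    (hn : ∀ t, n t = (Real.sqrt (h t))⁻¹ •
      ![-(dX ζ (x t, y t, t)), -(dY ζ (x t, y t, t)), 1])
    (Gx Gy : ℝ → ℝ)
    (hGx : ∀ t, Gx t = dXT ζ (x t, y t, t) + deriv x t * dXX ζ (x t, y t, t)
      + deriv y t * dXY ζ (x t, y t, t))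
    (hGy : ∀ t, Gy t = dYT ζ (x t, y t, t) + deriv x t * dXY ζ (x t, y t, t)
      + deriv y t * dYY ζ (x t, y t, t)) :
    ∀ t, (2 : ℝ) • crossProduct (n t) (deriv n t) =
      (2 / h t) • ![Gy t, -(Gx t),
        dX ζ (x t, y t, t) * Gy t - dY ζ (x t, y t, t) * Gx t] := by
  intro t
  have hdζ : ContDiff ℝ 1 (fderiv ℝ ζ) := hζ.fderiv_right (by norm_num)
  have hdX : Differentiable ℝ (dX ζ) :=
    (hdζ.clm_apply contDiff_const).differentiable (by norm_num)
  have hdY : Differentiable ℝ (dY ζ) :=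
    (hdζ.clm_apply contDiff_const).differentiable (by norm_num)
  have hxt : DifferentiableAt ℝ x t := hx.differentiable (by norm_num) t
  have hyt : DifferentiableAt ℝ y t := hy.differentiable (by norm_num) t
  have hX : HasDerivAt (fun s => dX ζ (x s, y s, s)) (Gx t) t := by
    rw [hGx]
    exact hasDerivAt_along_trajectory (hdX _) hxt hyt
  have hY : HasDerivAt (fun s => dY ζ (x s, y s, s)) (Gy t) t := by
    rw [hGy, ← fderiv_dY_apply_eq_dXY hζ]
    exact hasDerivAt_along_trajectory (hdY _) hxt hyt
  have hpos : 0 < h t := by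
    rw [hh]
    positivity
  have hdh : DifferentiableAt ℝ h t := by
    rw [funext hh]
    exact ((hX.differentiableAt.pow 2).const_add 1).add (hY.differentiableAt.pow 2)
  have hc : DifferentiableAt ℝ (fun s => (Real.sqrt (h s))⁻¹) t :=
    (hdh.sqrt hpos.ne').inv (Real.sqrt_pos.2 hpos).ne'
  have hm : HasDerivAt (fun s => ![-(dX ζ (x s, y s, s)), -(dY ζ (x s, y s, s)), 1])
      ![-(Gx t), -(Gy t), 0] t := by
    rw [hasDerivAt_pi]
    intro i
    fin_cases i
    · exact hX.neg
    · exact hY.neg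
    · exact hasDerivAt_const t 1
  have hcross := crossProduct_deriv_smul hc hm
  rw [funext hn, hcross, inv_pow, Real.sq_sqrt hpos.le, smul_smul, ← div_eq_mul_inv,
    cross_apply]
  simp

end
end

section
/- (Poisson bracket of the Dirac constraints.) On ℝ⁸ with coordinates (x, y, z, t, u_x, u_y, u_z, E), consider the canonical Poisson bracket {F, G} = F_x G_{u_x} + F_y G_{u_y} + F_z G_{u_z} + F_t G_E − F_{u_x} G_x − F_{u_y} G_y − F_{u_z} G_z − F_E G_t. Let ζ: ℝ² × ℝ → ℝ be C¹ and define the constraints Φ₁ = z − ζ(x, y, t) and Φ₂ = u_z − u_x ζ_x(x,y,t) − u_y ζ_y(x,y,t) − ζ_t(x,y,t). Then {Φ₁, Φ₂} = 1 + ζ_x² + ζ_y², which is everywhere nonzero; hence the 2×2 constraint matrix C with C₁₁ = C₂₂ = 0 and C₁₂ = −C₂₁ = {Φ₁, Φ₂} is invertible. -/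
noncomputable section

open Matrix

/-- Partial derivative of an observable `F` on the extended phase space `ℝ⁸`
(coordinates `(x, y, z, t, u_x, u_y, u_z, E)` indexed by `0,…,7`) with respect to the
`i`-th coordinate. -/
def pd (F : (Fin 8 → ℝ) → ℝ) (i : Fin 8) (w : Fin 8 → ℝ) : ℝ :=
  deriv (fun s => F (Function.update w i s)) (w i)

/-- The canonical Poisson bracket on `ℝ⁸` with conjugate pairs
`(x,u_x), (y,u_y), (z,u_z), (t,E)`:
`{F,G} = F_x G_{u_x} + F_y G_{u_y} + F_z G_{u_z} + F_t G_E
        − F_{u_x} G_x − F_{u_y} G_y − F_{u_z} G_z − F_E G_t`. -/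
def pbracket (F G : (Fin 8 → ℝ) → ℝ) (w : Fin 8 → ℝ) : ℝ :=
  pd F 0 w * pd G 4 w + pd F 1 w * pd G 5 w + pd F 2 w * pd G 6 w + pd F 3 w * pd G 7 w
    - pd F 4 w * pd G 0 w - pd F 5 w * pd G 1 w - pd F 6 w * pd G 2 w
    - pd F 7 w * pd G 3 w

/-- The partial derivative in `x` is the derivative along the `x`-axis. -/
lemma hasDerivAt_dX {ζ : ℝ × ℝ × ℝ → ℝ} {x y t : ℝ} (h : DifferentiableAt ℝ ζ (x, y, t)) :
    HasDerivAt (fun s => ζ (s, y, t)) (dX ζ (x, y, t)) x :=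
  h.hasFDerivAt.comp_hasDerivAt x
    ((hasDerivAt_id x).prodMk ((hasDerivAt_const x y).prodMk (hasDerivAt_const x t)))

/-- The partial derivative in `y` is the derivative along the `y`-axis. -/
lemma hasDerivAt_dY {ζ : ℝ × ℝ × ℝ → ℝ} {x y t : ℝ} (h : DifferentiableAt ℝ ζ (x, y, t)) :
    HasDerivAt (fun s => ζ (x, s, t)) (dY ζ (x, y, t)) y :=
  h.hasFDerivAt.comp_hasDerivAt y
    ((hasDerivAt_const y x).prodMk ((hasDerivAt_id y).prodMk (hasDerivAt_const y t)))

/-- The bracket of the position constraint with the velocity constraint. -/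
lemma pbracket_surface_constraints {ζ : ℝ × ℝ × ℝ → ℝ} (w : Fin 8 → ℝ)
    (h : DifferentiableAt ℝ ζ (w 0, w 1, w 3)) :
    pbracket (fun w => w 2 - ζ (w 0, w 1, w 3))
      (fun w => w 6 - w 4 * dX ζ (w 0, w 1, w 3)
        - w 5 * dY ζ (w 0, w 1, w 3) - dT ζ (w 0, w 1, w 3)) w =
      1 + dX ζ (w 0, w 1, w 3) ^ 2 + dY ζ (w 0, w 1, w 3) ^ 2 := by
  simp [pbracket, pd, (hasDerivAt_dX h).deriv, (hasDerivAt_dY h).deriv]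
  ring

/-- (Poisson bracket of the Dirac constraints.) For the constraints
`Φ₁ = z − ζ(x,y,t)` and `Φ₂ = u_z − u_x ζ_x − u_y ζ_y − ζ_t` on the extended phase
space `ℝ⁸`, one has `{Φ₁, Φ₂} = 1 + ζ_x² + ζ_y² ≠ 0`; hence the constraint matrix
`C = [[0, {Φ₁,Φ₂}],[−{Φ₁,Φ₂}, 0]]` is invertible. -/
theorem dirac_constraints_bracket
    (ζ : ℝ × ℝ × ℝ → ℝ) (hζ : ContDiff ℝ 1 ζ)
    (Φ₁ Φ₂ : (Fin 8 → ℝ) → ℝ)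
    (hΦ₁ : Φ₁ = fun w => w 2 - ζ (w 0, w 1, w 3))
    (hΦ₂ : Φ₂ = fun w => w 6 - w 4 * dX ζ (w 0, w 1, w 3)
      - w 5 * dY ζ (w 0, w 1, w 3) - dT ζ (w 0, w 1, w 3)) :
    ∀ w : Fin 8 → ℝ,
      pbracket Φ₁ Φ₂ w = 1 + dX ζ (w 0, w 1, w 3) ^ 2 + dY ζ (w 0, w 1, w 3) ^ 2 ∧
      pbracket Φ₁ Φ₂ w ≠ 0 ∧
      IsUnit (!![0, pbracket Φ₁ Φ₂ w; -(pbracket Φ₁ Φ₂ w), 0] :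
        Matrix (Fin 2) (Fin 2) ℝ).det := by
  intro w
  have hb : pbracket Φ₁ Φ₂ w =
      1 + dX ζ (w 0, w 1, w 3) ^ 2 + dY ζ (w 0, w 1, w 3) ^ 2 := by
    rw [hΦ₁, hΦ₂]
    exact pbracket_surface_constraints w (hζ.differentiable one_ne_zero _)
  have hne : pbracket Φ₁ Φ₂ w ≠ 0 := by
    rw [hb]
    positivity
  refine ⟨hb, hne, ?_⟩
  simpa [Matrix.det_fin_two] using hne

end
end
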